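/- Let M ∈ ℕ₀ and 0 ≤ κ < 1, and let P be a point set in [0,1)² with N = 2^{M+κ} points. Then ‖D_P | L₂‖² ≥ (M+1)·Δ(κ), where Δ(κ) = 3^{-1}·2^{2κ-8} − 7^{-1}·2^{3κ-8} + (2−2^κ)·γ(κ) + (2^κ−1)·γ(κ−1). -/

import Mathlib

open MeasureTheory

noncomputable section

/-- The half-open unit square `[0,1) × [0,1)` in `ℝ × ℝ`. -/
def unitSq : Set (ℝ × ℝ) := Set.Ico (0:ℝ) 1 ×ˢ Set.Ico (0:ℝ) 1

/-- The discrepancy function of the point configuration `p`. -/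
def disc (N : ℕ) (p : Fin N → ℝ × ℝ) (x : ℝ × ℝ) : ℝ :=
  (∑ i : Fin N, if 0 ≤ (p i).1 ∧ (p i).1 < x.1 ∧ 0 ≤ (p i).2 ∧ (p i).2 < x.2
    then (1:ℝ) else 0) - N * x.1 * x.2

/-- The `L₂`-discrepancy `‖D_P | L₂‖ = (∫_{[0,1)²} D_P(x)² dx)^{1/2}`. -/
def L2disc (N : ℕ) (p : Fin N → ℝ × ℝ) : ℝ :=
  Real.sqrt (∫ x in unitSq, disc N p x ^ 2)

/-- `g_κ(α,β) = (αβ − 2^{κ-2})² + (α(1−β) − 2^{κ-4})² + ((1−α)β − 2^{κ-4})²`. -/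
def gk (κ α β : ℝ) : ℝ :=
  (α * β - (2:ℝ) ^ (κ - 2)) ^ 2 + (α * (1 - β) - (2:ℝ) ^ (κ - 4)) ^ 2 +
    ((1 - α) * β - (2:ℝ) ^ (κ - 4)) ^ 2

/-- `h(κ) = inf { g_κ(α,β) : 1/2 ≤ α < 1, 1/2 ≤ β < 1 }`. -/
def hfun (κ : ℝ) : ℝ :=
  sInf { t : ℝ | ∃ α β : ℝ, 1/2 ≤ α ∧ α < 1 ∧ 1/2 ≤ β ∧ β < 1 ∧ t = gk κ α β }

/-- `γ(κ) = min(9·2^{2κ-13}, 2^{-4}·h(κ))`. -/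
def gam (κ : ℝ) : ℝ := min (9 * (2:ℝ) ^ (2 * κ - 13)) ((2:ℝ) ^ (-4 : ℝ) * hfun κ)

/-- `Δ(κ) = 3^{-1}·2^{2κ-8} − 7^{-1}·2^{3κ-8} + (2−2^κ)·γ(κ) + (2^κ−1)·γ(κ−1)`. -/
def Delta (κ : ℝ) : ℝ :=
  3⁻¹ * (2:ℝ) ^ (2 * κ - 8) - 7⁻¹ * (2:ℝ) ^ (3 * κ - 8) +
    (2 - (2:ℝ) ^ κ) * gam κ + ((2:ℝ) ^ κ - 1) * gam (κ - 1)

/-!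
By Bessel's inequality for the Haar system, `L2disc N p ^ 2` is at least the sum of the squared
normalised Haar coefficients (energies) over any set of dyadic boxes. A box of area `2 ^ -k`
without points has energy `(N / 2 ^ k) ^ 2 / (256 * 2 ^ k)`, and each of the `k + 1` shapes of that
area leaves at least `2 ^ k - N` boxes empty; over `k > M` these boxes contribute the difference of
two geometric series whose sums are the first two terms of `Δ`.

Boxes with few points can nearly cancel their own Haar coefficient, but not at the same time those
of the halves which contain the points. For a box with one point, its energy and half the energy of
its occupied halves in both directions add up to at least `γ(κ) / 2 ^ k`, where `2 ^ κ = N / 2 ^ k`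
and `α`, `β` are the values of the two tent functions at the point. Energies of halves may be halved
because a box is a half of at most two boxes, so that passing to the next level never counts a box
more than once. Starting from the boxes of area `2 ^ -M` and using levels `M`, `M + 1`, `M + 2`,
every box with `c` points is charged an amount that is affine in `c`; summing it only needs the
number of boxes and of points, and yields the terms with `γ(κ)` and `γ(κ - 1)`.
-/

section Bessel

open scoped InnerProductSpace

variable {ι : Type*} {s : Finset ι}

lemma sum_sq_norm_inner_div_sq_norm_le {𝕜 E : Type*} [RCLike 𝕜] [NormedAddCommGroup E]
    [InnerProductSpace 𝕜 E] {v : ι → E} (hv : ∀ a ∈ s, v a ≠ 0)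
    (orth : (s : Set ι).Pairwise fun a b => inner 𝕜 (v a) (v b) = 0) (x : E) :
    ∑ a ∈ s, ‖inner 𝕜 (v a) x‖ ^ 2 / ‖v a‖ ^ 2 ≤ ‖x‖ ^ 2 := by
  have normalized : Orthonormal 𝕜 fun a : s => ((‖v a‖⁻¹ : ℝ) : 𝕜) • v a := by
    refine ⟨fun a => ?_, fun a b hab => ?_⟩
    · have := norm_ne_zero_iff.2 (hv a a.2)
      simp [norm_smul, this]
    · simp only [inner_smul_left, inner_smul_right,
        orth a.2 b.2 (Subtype.coe_injective.ne hab), mul_zero]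
  rw [← Finset.sum_coe_sort]
  convert normalized.sum_inner_products_le (x := x) (s := Finset.univ) using 2 with a
  simp [inner_smul_left, mul_pow, div_eq_inv_mul]

variable {Ω : Type*} [MeasurableSpace Ω] {μ : Measure Ω}

lemma inner_toLp_eq_integral_mul {f g : Ω → ℝ} (hf : MemLp f 2 μ) (hg : MemLp g 2 μ) :
    ⟪hf.toLp f, hg.toLp g⟫_ℝ = ∫ x, f x * g x ∂μ := by
  rw [L2.inner_def]
  refine integral_congr_ae ?_
  filter_upwards [hf.coeFn_toLp, hg.coeFn_toLp] with x hfx hgx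
  simp [hfx, hgx, mul_comm]

lemma sum_sq_integral_mul_div_le {f : Ω → ℝ} {h : ι → Ω → ℝ} (hf : MemLp f 2 μ)
    (hh : ∀ a, MemLp (h a) 2 μ) (pos : ∀ a ∈ s, 0 < ∫ x, h a x * h a x ∂μ)
    (orth : (s : Set ι).Pairwise fun a b => ∫ x, h a x * h b x ∂μ = 0) :
    ∑ a ∈ s, (∫ x, h a x * f x ∂μ) ^ 2 / ∫ x, h a x * h a x ∂μ ≤ ∫ x, f x ^ 2 ∂μ := by
  have sq_norm {g : Ω → ℝ} (hg : MemLp g 2 μ) : ‖hg.toLp g‖ ^ 2 = ∫ x, g x * g x ∂μ := by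
    rw [← real_inner_self_eq_norm_sq, inner_toLp_eq_integral_mul]
  have bessel := sum_sq_norm_inner_div_sq_norm_le (𝕜 := ℝ) (s := s)
    (v := fun a => (hh a).toLp (h a)) (fun a ha h0 => (pos a ha).ne' ?_)
    (fun a ha b hb hab => (inner_toLp_eq_integral_mul _ _).trans (orth ha hb hab)) (hf.toLp f)
  · simpa only [sq_norm, inner_toLp_eq_integral_mul, Real.norm_eq_abs, sq_abs, ← sq] using bessel
  · rw [← sq_norm (hh a), h0, norm_zero, zero_pow two_ne_zero]

end Bessel

section Dyadic

/-- The dyadic interval `[m / 2 ^ j, (m + 1) / 2 ^ j)` of level `j`. -/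
def dyadicIco (j m : ℕ) : Set ℝ := Set.Ico ((m : ℝ) / 2 ^ j) (((m : ℝ) + 1) / 2 ^ j)

variable {j j' m m' n : ℕ} {x y : ℝ}

lemma measurableSet_dyadicIco : MeasurableSet (dyadicIco j m) := measurableSet_Ico

lemma mem_dyadicIco : x ∈ dyadicIco j m ↔ (m : ℝ) ≤ 2 ^ j * x ∧ 2 ^ j * x < m + 1 := by
  rw [dyadicIco, Set.mem_Ico, div_le_iff₀' (by positivity), lt_div_iff₀' (by positivity)]

lemma mem_dyadicIco_iff_floor : x ∈ dyadicIco j m ↔ 0 ≤ x ∧ ⌊2 ^ j * x⌋₊ = m := by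
  rw [mem_dyadicIco]
  have hj : (0 : ℝ) < 2 ^ j := by positivity
  refine ⟨fun h => ?_, fun ⟨hx, h⟩ => (Nat.floor_eq_iff (by positivity)).1 h⟩
  have hx : 0 ≤ 2 ^ j * x := m.cast_nonneg.trans h.1
  exact ⟨nonneg_of_mul_nonneg_right hx hj, (Nat.floor_eq_iff hx).2 h⟩

lemma floor_two_pow_mul (h : j ≤ j') (x : ℝ) :
    ⌊2 ^ j * x⌋₊ = ⌊2 ^ j' * x⌋₊ / 2 ^ (j' - j) := by
  obtain ⟨d, rfl⟩ := Nat.exists_eq_add_of_le h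
  rw [← Nat.floor_div_natCast, Nat.add_sub_cancel_left, pow_add]
  congr 1
  push_cast
  field_simp

lemma dyadicIco_eq_union :
    dyadicIco j m = dyadicIco (j + 1) (2 * m) ∪ dyadicIco (j + 1) (2 * m + 1) := by
  ext x
  simp only [Set.mem_union, mem_dyadicIco_iff_floor, floor_two_pow_mul j.le_succ x,
    Nat.succ_eq_add_one, Nat.add_sub_cancel_left, pow_one]
  grind

lemma eq_of_mem_dyadicIco (h : x ∈ dyadicIco j m) (h' : x ∈ dyadicIco j m') : m = m' := by
  rw [mem_dyadicIco_iff_floor] at h h'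
  exact h.2.symm.trans h'.2

lemma disjoint_dyadicIco (h : m ≠ m') : Disjoint (dyadicIco j m) (dyadicIco j m') :=
  Set.disjoint_left.2 fun _ hx hx' => h (eq_of_mem_dyadicIco hx hx')

lemma indicator_dyadicIco_eq_add (j m : ℕ) :
    (dyadicIco j m).indicator (1 : ℝ → ℝ) = (dyadicIco (j + 1) (2 * m)).indicator 1 +
      (dyadicIco (j + 1) (2 * m + 1)).indicator 1 := by
  rw [dyadicIco_eq_union, Set.indicator_union_of_disjoint (disjoint_dyadicIco (by omega))]
  rfl

lemma lt_two_pow_of_mem_dyadicIco (h : x ∈ dyadicIco j m) (hx : x < 1) : m < 2 ^ j := by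
  have hj : (0 : ℝ) < 2 ^ j := by positivity
  exact_mod_cast (mem_dyadicIco.1 h).1.trans_lt ((mul_lt_iff_lt_one_right hj).2 hx)

lemma dyadicIco_subset_Ico (h : m < 2 ^ j) : dyadicIco j m ⊆ Set.Ico 0 1 := by
  refine Set.Ico_subset_Ico (by positivity) ?_
  rw [div_le_one (by positivity)]
  exact_mod_cast h

lemma mem_dyadicIco_iff_of_mem (h : j ≤ j') (hx : x ∈ dyadicIco j' m') (hy : y ∈ dyadicIco j' m') :
    x ∈ dyadicIco j m ↔ y ∈ dyadicIco j m := by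
  rw [mem_dyadicIco_iff_floor] at hx hy
  simp only [mem_dyadicIco_iff_floor, floor_two_pow_mul h, hx, hy]

/-- The Haar function of the dyadic interval `dyadicIco j m`, normalised in `L^∞`: `1` on its left
half and `-1` on its right half. -/
def haar (j m : ℕ) : ℝ → ℝ :=
  (dyadicIco (j + 1) (2 * m)).indicator 1 - (dyadicIco (j + 1) (2 * m + 1)).indicator 1

lemma measurable_haar (j m : ℕ) : Measurable (haar j m) :=
  (measurable_one.indicator measurableSet_dyadicIco).sub
    (measurable_one.indicator measurableSet_dyadicIco)

lemma haar_of_notMem (h : x ∉ dyadicIco j m) : haar j m x = 0 := by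
  rw [dyadicIco_eq_union, Set.mem_union, not_or] at h
  simp [haar, h.1, h.2]

lemma haar_mul_self (j m : ℕ) (x : ℝ) :
    haar j m x * haar j m x = (dyadicIco j m).indicator 1 x := by
  have h := (disjoint_dyadicIco (j := j + 1) (by omega : 2 * m ≠ 2 * m + 1)).notMem_of_mem_left
    (a := x)
  rw [indicator_dyadicIco_eq_add]
  by_cases hl : x ∈ dyadicIco (j + 1) (2 * m) <;>
    by_cases hr : x ∈ dyadicIco (j + 1) (2 * m + 1) <;> simp_all [haar]

lemma abs_haar_le_one (j m : ℕ) (x : ℝ) : |haar j m x| ≤ 1 := by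
  rw [abs_le_one_iff_mul_self_le_one, haar_mul_self]
  exact Set.indicator_le_self' (fun _ _ => zero_le_one) x

lemma memLp_haar {q : ENNReal} {μ : Measure ℝ} [IsFiniteMeasure μ] : MemLp (haar j m) q μ :=
  .of_bound (measurable_haar j m).aestronglyMeasurable 1 (.of_forall (abs_haar_le_one j m))

lemma haar_mul_haar_of_lt (h : j < j') (x : ℝ) :
    haar j m x * haar j' m' x = haar j m (m' / 2 ^ j') * haar j' m' x := by
  by_cases hx : x ∈ dyadicIco j' m'
  · have left_mem : (m' : ℝ) / 2 ^ j' ∈ dyadicIco j' m' :=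
      Set.left_mem_Ico.2 (by gcongr; exact lt_add_one _)
    have indicator_eq (n : ℕ) : (dyadicIco (j + 1) n).indicator (1 : ℝ → ℝ) x =
        (dyadicIco (j + 1) n).indicator 1 (m' / 2 ^ j') := by
      classical
      simp only [Set.indicator_apply, Pi.one_apply]
      exact if_congr (mem_dyadicIco_iff_of_mem h hx left_mem) rfl rfl
    simp only [haar, Pi.sub_apply, indicator_eq]
  · simp only [haar_of_notMem hx, mul_zero]

lemma setIntegral_dyadicIco (f : ℝ → ℝ) :
    ∫ x in dyadicIco j m, f x = ∫ x in (m / 2 ^ j : ℝ)..((m + 1) / 2 ^ j), f x := by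
  rw [intervalIntegral.integral_of_le (by gcongr; linarith), dyadicIco,
    integral_Ico_eq_integral_Ioo, integral_Ioc_eq_integral_Ioo]

lemma integral_haar_mul (hm : m < 2 ^ j) {f : ℝ → ℝ} (hf : IntegrableOn f (Set.Ico 0 1)) :
    ∫ x in Set.Ico (0 : ℝ) 1, haar j m x * f x =
      (∫ x in (m / 2 ^ j : ℝ)..((m + 1 / 2) / 2 ^ j), f x) -
        ∫ x in ((m + 1 / 2) / 2 ^ j : ℝ)..((m + 1) / 2 ^ j), f x := by
  have integral_half {n : ℕ} (hn : n < 2 ^ (j + 1)) :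
      ∫ x in Set.Ico (0 : ℝ) 1, (dyadicIco (j + 1) n).indicator f x =
        ∫ x in (n / 2 ^ (j + 1) : ℝ)..((n + 1) / 2 ^ (j + 1)), f x := by
    rw [setIntegral_indicator measurableSet_dyadicIco,
      Set.inter_eq_right.2 (dyadicIco_subset_Ico hn), setIntegral_dyadicIco]
  have integrable_half (n : ℕ) :
      IntegrableOn ((dyadicIco (j + 1) n).indicator f) (Set.Ico 0 1) :=
    hf.indicator measurableSet_dyadicIco
  have haar_mul (x : ℝ) : haar j m x * f x =
      (dyadicIco (j + 1) (2 * m)).indicator f x -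
        (dyadicIco (j + 1) (2 * m + 1)).indicator f x := by
    simp only [haar, Pi.sub_apply, sub_mul, ← Set.indicator_mul_left, Pi.one_apply, one_mul]
  simp only [haar_mul]
  rw [integral_sub (integrable_half _) (integrable_half _), integral_half (by rw [pow_succ]; omega),
    integral_half (by rw [pow_succ]; omega)]
  congr 2 <;> push_cast <;> field_simp <;> ring

lemma integral_haar (hm : m < 2 ^ j) : ∫ x in Set.Ico (0 : ℝ) 1, haar j m x = 0 := by
  have h := integral_haar_mul hm (f := fun _ => 1) (by simp)
  simp only [mul_one, integral_one] at h
  rw [h]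
  field_simp
  ring

lemma integral_haar_mul_id (hm : m < 2 ^ j) :
    ∫ x in Set.Ico (0 : ℝ) 1, haar j m x * x = -(1 / (4 * (2 ^ j) ^ 2)) := by
  rw [integral_haar_mul hm (f := fun x => x)
    (continuous_id.integrableOn_Icc.mono_set Set.Ico_subset_Icc_self), integral_id, integral_id]
  field_simp
  ring

lemma integral_haar_mul_self (hm : m < 2 ^ j) :
    ∫ x in Set.Ico (0 : ℝ) 1, haar j m x * haar j m x = 1 / 2 ^ j := by
  simp only [haar_mul_self]
  rw [setIntegral_indicator measurableSet_dyadicIco,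
    Set.inter_eq_right.2 (dyadicIco_subset_Ico hm), setIntegral_dyadicIco]
  simp only [Pi.one_apply, integral_one]
  ring

lemma integral_haar_mul_haar (hm : m < 2 ^ j) (hm' : m' < 2 ^ j') (h : (j, m) ≠ (j', m')) :
    ∫ x in Set.Ico (0 : ℝ) 1, haar j m x * haar j' m' x = 0 := by
  rcases lt_trichotomy j j' with hj | rfl | hj
  · simp only [haar_mul_haar_of_lt hj, integral_const_mul, integral_haar hm', mul_zero]
  · have disjoint := disjoint_dyadicIco (j := j) (fun hmm => h (by rw [hmm]) : m ≠ m')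
    have haar_mul_eq_zero (x : ℝ) : haar j m x * haar j m' x = 0 := by
      by_cases hx : x ∈ dyadicIco j m
      · rw [haar_of_notMem (disjoint.notMem_of_mem_left hx), mul_zero]
      · rw [haar_of_notMem hx, zero_mul]
    simp only [haar_mul_eq_zero, integral_zero]
  · simp only [mul_comm (haar j m _), haar_mul_haar_of_lt hj, integral_const_mul, integral_haar hm,
      mul_zero]

/-- The Faber–Schauder tent function of `dyadicIco j m`, a multiple of the primitive of
`haar j m`. -/
def tent (j m : ℕ) (x : ℝ) : ℝ := max 0 (1 - |2 * (2 ^ j * x - m) - 1|)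

lemma tent_mem_Icc (j m : ℕ) (x : ℝ) : tent j m x ∈ Set.Icc 0 1 :=
  ⟨le_max_left _ _, max_le zero_le_one (sub_le_self _ (abs_nonneg _))⟩

lemma tent_of_notMem (h : x ∉ dyadicIco j m) : tent j m x = 0 := by
  rw [mem_dyadicIco] at h
  grind [tent]

lemma tent_succ (hx : x ∈ dyadicIco (j + 1) n) (hn : n = 2 * m ∨ n = 2 * m + 1) :
    tent (j + 1) n x = 2 * min (tent j m x) (1 - tent j m x) := by
  rw [mem_dyadicIco, pow_succ] at hx
  simp only [tent, pow_succ]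
  rcases hn with rfl | rfl <;> push_cast at hx ⊢ <;> grind

lemma memLp_indicator_Ico_apply {q : ENNReal} (p : ℝ) :
    MemLp (fun x => (Set.Ico 0 x).indicator (1 : ℝ → ℝ) p) q (volume.restrict (Set.Ico 0 1)) := by
  classical
  have measurable : Measurable fun x => (Set.Ico 0 x).indicator (1 : ℝ → ℝ) p := by
    simp only [Set.indicator_apply, Set.mem_Ico, Pi.one_apply]
    exact .ite (by measurability) measurable_const measurable_const
  refine .of_bound measurable.aestronglyMeasurable 1 (.of_forall fun x => ?_)
  by_cases hx : p ∈ Set.Ico 0 x <;> simp [hx]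

lemma integral_indicator_Ico_apply {p a b : ℝ} (hp : 0 ≤ p) (hab : a ≤ b) :
    ∫ x in a..b, (Set.Ico 0 x).indicator (1 : ℝ → ℝ) p = max (b - max a p) 0 := by
  have flip : (fun x => (Set.Ico 0 x).indicator (1 : ℝ → ℝ) p) = (Set.Ioi p).indicator 1 := by
    ext x
    simp [Set.indicator, hp]
  rw [intervalIntegral.integral_of_le hab, flip, setIntegral_indicator measurableSet_Ioi,
    Set.Ioc_inter_Ioi]
  simp [Measure.real, ENNReal.toReal_ofReal', max_comm]

lemma integral_haar_mul_indicator_Ico (hm : m < 2 ^ j) (p : ℝ) :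
    ∫ x in Set.Ico (0 : ℝ) 1, haar j m x * (Set.Ico 0 x).indicator 1 p =
      -(tent j m p / (2 * 2 ^ j)) := by
  have hj : (0 : ℝ) < 2 ^ j := by positivity
  rcases lt_or_ge p 0 with hp | hp
  · have notMem (x : ℝ) : p ∉ Set.Ico 0 x := fun h => hp.not_ge h.1
    have hp' : p ∉ dyadicIco j m := fun h => hp.not_ge (dyadicIco_subset_Ico hm h).1
    simp [notMem, tent_of_notMem hp']
  · have integrable := (memLp_indicator_Ico_apply (q := 1) p).integrable le_rfl
    have rescale {a b : ℝ} : max (b / 2 ^ j - max (a / 2 ^ j) p) 0 =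
        max (b - max a (2 ^ j * p)) 0 / 2 ^ j := by
      rw [← max_div_div_right hj.le, sub_div, ← max_div_div_right hj.le,
        mul_div_cancel_left₀ _ hj.ne', zero_div]
    rw [integral_haar_mul hm integrable, integral_indicator_Ico_apply hp (by gcongr; linarith),
      integral_indicator_Ico_apply hp (by gcongr; linarith), rescale, rescale, ← sub_div,
      div_mul_eq_div_div, ← neg_div]
    congr 1
    simp only [tent]
    grind

end Dyadic

section BoxHaar

lemma memLp_two_mul_prod {Ω Ω' : Type*} [MeasurableSpace Ω] [MeasurableSpace Ω'] {μ : Measure Ω}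
    {ν : Measure Ω'} [SFinite μ] [SFinite ν] {f : Ω → ℝ} {g : Ω' → ℝ} (hf : MemLp f 2 μ)
    (hg : MemLp g 2 ν) : MemLp (fun x => f x.1 * g x.2) 2 (μ.prod ν) := by
  have measurable : AEStronglyMeasurable (fun x => f x.1 * g x.2) (μ.prod ν) :=
    hf.1.comp_fst.mul hg.1.comp_snd
  rw [memLp_two_iff_integrable_sq measurable]
  simpa only [mul_pow] using hf.integrable_sq.mul_prod hg.integrable_sq

lemma volume_restrict_unitSq : volume.restrict unitSq =
    (volume.restrict (Set.Ico (0 : ℝ) 1)).prod (volume.restrict (Set.Ico (0 : ℝ) 1)) :=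
  (Measure.prod_restrict _ _).symm

/-- The Haar function of the dyadic box `dyadicIco j.1 m.1 ×ˢ dyadicIco j.2 m.2`. Levels and
positions of boxes are stored as pairs, one component per coordinate. -/
def boxHaar (j m : ℕ × ℕ) (x : ℝ × ℝ) : ℝ := haar j.1 m.1 x.1 * haar j.2 m.2 x.2

/-- The positions of the dyadic boxes of level `j` that tile the unit square. -/
def boxPositions (j : ℕ × ℕ) : Finset (ℕ × ℕ) :=
  Finset.range (2 ^ j.1) ×ˢ Finset.range (2 ^ j.2)

variable {j m j' m' : ℕ × ℕ} {N : ℕ}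

lemma mem_boxPositions : m ∈ boxPositions j ↔ m.1 < 2 ^ j.1 ∧ m.2 < 2 ^ j.2 := by
  simp only [boxPositions, Finset.mem_product, Finset.mem_range]

lemma memLp_boxHaar (j m : ℕ × ℕ) : MemLp (boxHaar j m) 2 (volume.restrict unitSq) := by
  rw [volume_restrict_unitSq]
  exact memLp_two_mul_prod memLp_haar memLp_haar

lemma integral_boxHaar_mul (f g : ℝ → ℝ) :
    ∫ x in unitSq, boxHaar j m x * (f x.1 * g x.2) =
      (∫ x in Set.Ico (0 : ℝ) 1, haar j.1 m.1 x * f x) *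
        ∫ x in Set.Ico (0 : ℝ) 1, haar j.2 m.2 x * g x := by
  rw [← setIntegral_prod_mul]
  simp only [boxHaar, mul_mul_mul_comm]
  rfl

lemma integral_boxHaar_mul_self (hm : m ∈ boxPositions j) :
    ∫ x in unitSq, boxHaar j m x * boxHaar j m x = 1 / 2 ^ (j.1 + j.2) := by
  rw [mem_boxPositions] at hm
  exact (integral_boxHaar_mul _ _).trans <| by
    rw [integral_haar_mul_self hm.1, integral_haar_mul_self hm.2, div_mul_div_comm, one_mul,
      pow_add]

lemma integral_boxHaar_mul_boxHaar (hm : m ∈ boxPositions j) (hm' : m' ∈ boxPositions j')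
    (h : (j, m) ≠ (j', m')) : ∫ x in unitSq, boxHaar j m x * boxHaar j' m' x = 0 := by
  rw [mem_boxPositions] at hm hm'
  refine (integral_boxHaar_mul _ _).trans (mul_eq_zero.2 ?_)
  by_cases h₁ : (j.1, m.1) = (j'.1, m'.1)
  · refine .inr (integral_haar_mul_haar hm.2 hm'.2 fun h₂ => h ?_)
    grind
  · exact .inl (integral_haar_mul_haar hm.1 hm'.1 h₁)

lemma disc_eq_sum_indicator_sub (p : Fin N → ℝ × ℝ) (x : ℝ × ℝ) :
    disc N p x = ∑ i, (Set.Ico 0 x.1).indicator 1 (p i).1 * (Set.Ico 0 x.2).indicator 1 (p i).2 -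
      N * (x.1 * x.2) := by
  classical
  simp only [disc, Set.indicator_apply, Set.mem_Ico, Pi.one_apply, ite_mul, one_mul, zero_mul,
    ← ite_and, and_assoc, mul_assoc]

lemma memLp_indicator_Ico_mul (q : ℝ × ℝ) :
    MemLp (fun x : ℝ × ℝ => (Set.Ico 0 x.1).indicator (1 : ℝ → ℝ) q.1 *
      (Set.Ico 0 x.2).indicator 1 q.2) 2 (volume.restrict unitSq) := by
  rw [volume_restrict_unitSq]
  exact memLp_two_mul_prod (memLp_indicator_Ico_apply _) (memLp_indicator_Ico_apply _)

lemma memLp_fst_mul_snd :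
    MemLp (fun x : ℝ × ℝ => x.1 * x.2) 2 (volume.restrict unitSq) := by
  have memLp_id : MemLp (fun x : ℝ => x) 2 (volume.restrict (Set.Ico 0 1)) :=
    .of_bound aestronglyMeasurable_id 1 <| ae_restrict_of_forall_mem measurableSet_Ico fun x hx =>
      (abs_of_nonneg hx.1).trans_le hx.2.le
  rw [volume_restrict_unitSq]
  exact memLp_two_mul_prod memLp_id memLp_id

lemma memLp_disc (p : Fin N → ℝ × ℝ) : MemLp (disc N p) 2 (volume.restrict unitSq) := by
  rw [funext (disc_eq_sum_indicator_sub p)]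
  exact (memLp_finsetSum _ fun i _ => memLp_indicator_Ico_mul (p i)).sub
    (memLp_fst_mul_snd.const_mul _)

/-- The sum over the point set of the tensor-product tent function of a dyadic box. -/
def tentSum (p : Fin N → ℝ × ℝ) (j m : ℕ × ℕ) : ℝ :=
  ∑ i, tent j.1 m.1 (p i).1 * tent j.2 m.2 (p i).2

lemma integral_boxHaar_mul_disc (p : Fin N → ℝ × ℝ) (hm : m ∈ boxPositions j) :
    ∫ x in unitSq, boxHaar j m x * disc N p x =
      (tentSum p j m - N / 2 ^ (j.1 + j.2) / 4) / (4 * 2 ^ (j.1 + j.2)) := by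
  rw [mem_boxPositions] at hm
  have integral_point (q : ℝ × ℝ) : ∫ x in unitSq, boxHaar j m x *
      ((Set.Ico 0 x.1).indicator 1 q.1 * (Set.Ico 0 x.2).indicator 1 q.2) =
        tent j.1 m.1 q.1 * tent j.2 m.2 q.2 / (4 * 2 ^ (j.1 + j.2)) := by
    rw [integral_boxHaar_mul (fun t => (Set.Ico 0 t).indicator 1 q.1)
      (fun t => (Set.Ico 0 t).indicator 1 q.2), integral_haar_mul_indicator_Ico hm.1,
      integral_haar_mul_indicator_Ico hm.2]
    ring
  have integral_area : ∫ x in unitSq, boxHaar j m x * (x.1 * x.2) =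
      1 / (16 * (2 ^ (j.1 + j.2)) ^ 2) := by
    rw [integral_boxHaar_mul (fun t => t) (fun t => t), integral_haar_mul_id hm.1,
      integral_haar_mul_id hm.2]
    ring
  have integrable {f : ℝ × ℝ → ℝ} (hf : MemLp f 2 (volume.restrict unitSq)) :
      IntegrableOn (fun x => boxHaar j m x * f x) unitSq := (memLp_boxHaar j m).integrable_mul hf
  simp only [disc_eq_sum_indicator_sub, mul_sub, Finset.mul_sum, mul_left_comm _ (N : ℝ)]
  rw [integral_sub (integrable_finsetSum _ fun i _ => integrable (memLp_indicator_Ico_mul (p i)))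
    ((integrable memLp_fst_mul_snd).const_mul _), integral_finsetSum _
    fun i _ => integrable (memLp_indicator_Ico_mul (p i)), integral_const_mul, integral_area]
  simp only [integral_point, ← Finset.sum_div, tentSum]
  field_simp
  ring

/-- The contribution of the Haar function of a dyadic box to `L2disc N p ^ 2`: the square of its
inner product with `disc N p`, divided by the area of the box. -/
def boxEnergy (p : Fin N → ℝ × ℝ) (j m : ℕ × ℕ) : ℝ :=
  (tentSum p j m - N / 2 ^ (j.1 + j.2) / 4) ^ 2 / (16 * 2 ^ (j.1 + j.2))

lemma boxEnergy_nonneg (p : Fin N → ℝ × ℝ) (j m : ℕ × ℕ) : 0 ≤ boxEnergy p j m := by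
  unfold boxEnergy
  positivity

lemma sum_boxEnergy_le (p : Fin N → ℝ × ℝ) (J : Finset (ℕ × ℕ)) :
    ∑ j ∈ J, ∑ m ∈ boxPositions j, boxEnergy p j m ≤ L2disc N p ^ 2 := by
  have mem {a : Σ _ : ℕ × ℕ, ℕ × ℕ} (ha : a ∈ J.sigma boxPositions) : a.2 ∈ boxPositions a.1 :=
    (Finset.mem_sigma.1 ha).2
  have bessel := sum_sq_integral_mul_div_le (s := J.sigma boxPositions)
    (h := fun a => boxHaar a.1 a.2) (memLp_disc p) (fun a => memLp_boxHaar a.1 a.2)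
    (fun a ha => by rw [integral_boxHaar_mul_self (mem ha)]; positivity)
    (fun a ha b hb hab => integral_boxHaar_mul_boxHaar (mem ha) (mem hb) fun h => hab <| by
      grind [Sigma.ext_iff])
  rw [L2disc, Real.sq_sqrt (integral_nonneg fun x => sq_nonneg _), Finset.sum_sigma']
  refine le_of_eq_of_le (Finset.sum_congr rfl fun a ha => ?_) bessel
  rw [integral_boxHaar_mul_disc p (mem ha), integral_boxHaar_mul_self (mem ha), boxEnergy]
  field_simp
  ring

end BoxHaar

section PointCount

/-- The dyadic box of level `j` at position `m`; its area is `2 ^ -(j.1 + j.2)`. -/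
def dyadicBox (j m : ℕ × ℕ) : Set (ℝ × ℝ) := dyadicIco j.1 m.1 ×ˢ dyadicIco j.2 m.2

variable {N : ℕ} {p : Fin N → ℝ × ℝ} {j m : ℕ × ℕ}

open Classical in
/-- The number of points in a dyadic box. -/
def pointCount (p : Fin N → ℝ × ℝ) (j m : ℕ × ℕ) : ℕ :=
  (Finset.univ.filter (p · ∈ dyadicBox j m)).card

lemma pointCount_eq_zero_iff : pointCount p j m = 0 ↔ ∀ i, p i ∉ dyadicBox j m := by
  simp [pointCount, Finset.filter_eq_empty_iff]

lemma exists_unique_of_pointCount_eq_one (h : pointCount p j m = 1) :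
    ∃! i, p i ∈ dyadicBox j m := by
  classical
  simpa [pointCount, Finset.card_eq_one, Finset.ext_iff, ExistsUnique, iff_def, forall_and,
    and_comm] using h

lemma pointCount_eq_sum_indicator (p : Fin N → ℝ × ℝ) (j m : ℕ × ℕ) :
    (pointCount p j m : ℝ) = ∑ i, (dyadicIco j.1 m.1).indicator 1 (p i).1 *
      (dyadicIco j.2 m.2).indicator 1 (p i).2 := by
  classical
  simp only [pointCount, dyadicBox, Set.mem_prod, Set.indicator_apply, Pi.one_apply, ite_mul,
    one_mul, zero_mul, ← ite_and, Finset.sum_boole]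

lemma sum_pointCount (hp : ∀ i, p i ∈ unitSq) (j : ℕ × ℕ) :
    ∑ m ∈ boxPositions j, pointCount p j m = N := by
  classical
  have mem_iff (i : Fin N) (m : ℕ × ℕ) :
      p i ∈ dyadicBox j m ↔ (⌊2 ^ j.1 * (p i).1⌋₊, ⌊2 ^ j.2 * (p i).2⌋₊) = m := by
    simp only [dyadicBox, Set.mem_prod, mem_dyadicIco_iff_floor, (hp i).1.1, (hp i).2.1,
      true_and, Prod.ext_iff]
  have fiberwise := Finset.card_eq_sum_card_fiberwise (s := (Finset.univ : Finset (Fin N)))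
    (t := boxPositions j) (f := fun i => (⌊2 ^ j.1 * (p i).1⌋₊, ⌊2 ^ j.2 * (p i).2⌋₊))
    fun i _ => by
      have mem := (mem_iff i _).2 rfl
      exact mem_boxPositions.2 ⟨lt_two_pow_of_mem_dyadicIco mem.1 (hp i).1.2,
        lt_two_pow_of_mem_dyadicIco mem.2 (hp i).2.2⟩
  simpa only [pointCount, mem_iff, Finset.card_univ, Fintype.card_fin] using fiberwise.symm

end PointCount

section Halves

variable {N : ℕ} {j m : ℕ × ℕ} {F G : ℕ × ℕ → ℕ × ℕ → ℝ}

/-- The sum of `F` over the two halves of a dyadic box cut in the first coordinate. -/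
def fstHalvesSum (F : ℕ × ℕ → ℕ × ℕ → ℝ) (j m : ℕ × ℕ) : ℝ :=
  F (j.1 + 1, j.2) (2 * m.1, m.2) + F (j.1 + 1, j.2) (2 * m.1 + 1, m.2)

/-- The sum of `F` over the two halves of a dyadic box cut in the second coordinate. -/
def sndHalvesSum (F : ℕ × ℕ → ℕ × ℕ → ℝ) (j m : ℕ × ℕ) : ℝ :=
  F (j.1, j.2 + 1) (m.1, 2 * m.2) + F (j.1, j.2 + 1) (m.1, 2 * m.2 + 1)

/-- The average over the two coordinates of the sum of `F` over the halves of a dyadic box. As a box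
is a half of at most two boxes, summing these averages over a level does not exceed the sum of `F`
over the next level (`levelSum_halvesAvg_le`). -/
def halvesAvg (F : ℕ × ℕ → ℕ × ℕ → ℝ) (j m : ℕ × ℕ) : ℝ :=
  (fstHalvesSum F j m + sndHalvesSum F j m) / 2

lemma fstHalvesSum_pointCount (p : Fin N → ℝ × ℝ) (j m : ℕ × ℕ) :
    fstHalvesSum (fun j m => (pointCount p j m : ℝ)) j m = pointCount p j m := by
  simp only [fstHalvesSum, pointCount_eq_sum_indicator, indicator_dyadicIco_eq_add j.1,
    Pi.add_apply, add_mul, Finset.sum_add_distrib]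

lemma sndHalvesSum_pointCount (p : Fin N → ℝ × ℝ) (j m : ℕ × ℕ) :
    sndHalvesSum (fun j m => (pointCount p j m : ℝ)) j m = pointCount p j m := by
  simp only [sndHalvesSum, pointCount_eq_sum_indicator, indicator_dyadicIco_eq_add j.2,
    Pi.add_apply, mul_add, Finset.sum_add_distrib]

lemma halvesAvg_mono (h : ∀ j' m', j'.1 + j'.2 = j.1 + j.2 + 1 → F j' m' ≤ G j' m') :
    halvesAvg F j m ≤ halvesAvg G j m := by
  have h₁ (n : ℕ × ℕ) := h (j.1 + 1, j.2) n (by omega)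
  have h₂ (n : ℕ × ℕ) := h (j.1, j.2 + 1) n (by omega)
  unfold halvesAvg fstHalvesSum sndHalvesSum
  gcongr ((?_ + ?_) + (?_ + ?_)) / 2
  exacts [h₁ _, h₁ _, h₂ _, h₂ _]

lemma halvesAvg_nonneg (h : ∀ j m, 0 ≤ F j m) (j m : ℕ × ℕ) : 0 ≤ halvesAvg F j m := by
  rw [halvesAvg, fstHalvesSum, sndHalvesSum]
  exact div_nonneg (add_nonneg (add_nonneg (h _ _) (h _ _)) (add_nonneg (h _ _) (h _ _)))
    zero_le_two

lemma halvesAvg_add : halvesAvg (F + G) j m = halvesAvg F j m + halvesAvg G j m := by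
  simp only [halvesAvg, fstHalvesSum, sndHalvesSum, Pi.add_apply]
  ring

lemma halvesAvg_affine_pointCount (a b : ℝ) (p : Fin N → ℝ × ℝ) (j m : ℕ × ℕ) :
    halvesAvg (fun j m => a + b * pointCount p j m) j m = 2 * a + b * pointCount p j m := by
  have h₁ := fstHalvesSum_pointCount p j m
  have h₂ := sndHalvesSum_pointCount p j m
  simp only [halvesAvg, fstHalvesSum, sndHalvesSum] at h₁ h₂ ⊢
  linear_combination b / 2 * (h₁ + h₂)

end Halves

section Gamma

variable {κ α β : ℝ}

lemma gk_nonneg (κ α β : ℝ) : 0 ≤ gk κ α β := by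
  unfold gk
  positivity

lemma gk_eq (κ α β : ℝ) : gk κ α β = (α * β - 2 ^ κ / 4) ^ 2 + (α * (1 - β) - 2 ^ κ / 16) ^ 2 +
    ((1 - α) * β - 2 ^ κ / 16) ^ 2 := by
  have two_rpow_sub (n : ℕ) : (2 : ℝ) ^ (κ - n) = 2 ^ κ / 2 ^ n :=
    Real.rpow_sub_natCast (by simp) κ n
  have two := two_rpow_sub 2
  have four := two_rpow_sub 4
  rw [Nat.cast_ofNat] at two four
  rw [gk, two, four]
  norm_num

lemma gam_eq (κ : ℝ) : gam κ = min (9 * (2 ^ κ) ^ 2 / 8192) (hfun κ / 16) := by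
  have thirteen : (2 : ℝ) ^ (2 * κ - 13) = (2 ^ κ) ^ 2 / 8192 := by
    rw [Real.rpow_sub two_pos, two_mul, Real.rpow_add two_pos, sq]
    norm_num
  have four : (2 : ℝ) ^ (-4 : ℝ) = 1 / 16 := by
    rw [Real.rpow_neg zero_le_two]
    norm_num
  rw [gam, thirteen, four, mul_div_assoc, one_div_mul_eq_div]

lemma hfun_nonneg (κ : ℝ) : 0 ≤ hfun κ :=
  Real.sInf_nonneg fun _ ⟨α, β, _, _, _, _, ht⟩ => ht ▸ gk_nonneg κ α β

lemma hfun_le_gk (hα : α ∈ Set.Icc (1 / 2) 1) (hβ : β ∈ Set.Icc (1 / 2) 1) :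
    hfun κ ≤ gk κ α β := by
  have bddBelow :
      BddBelow {t | ∃ α β, 1 / 2 ≤ α ∧ α < 1 ∧ 1 / 2 ≤ β ∧ β < 1 ∧ t = gk κ α β} :=
    ⟨0, fun _ ⟨α, β, _, _, _, _, ht⟩ => ht ▸ gk_nonneg κ α β⟩
  have half_open : Set.Ico (1 / 2 : ℝ) 1 ×ˢ Set.Ico (1 / 2 : ℝ) 1 ⊆
      {z | hfun κ ≤ gk κ z.1 z.2} := fun z hz =>
    csInf_le bddBelow ⟨z.1, z.2, hz.1.1, hz.1.2, hz.2.1, hz.2.2, rfl⟩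
  have closed : IsClosed {z : ℝ × ℝ | hfun κ ≤ gk κ z.1 z.2} :=
    isClosed_le continuous_const (by unfold gk; fun_prop)
  have mem : (α, β) ∈ closure (Set.Ico (1 / 2 : ℝ) 1 ×ˢ Set.Ico (1 / 2 : ℝ) 1) := by
    rw [closure_prod_eq, closure_Ico (by norm_num)]
    exact ⟨hα, hβ⟩
  exact closure_minimal half_open closed mem

lemma gam_nonneg (κ : ℝ) : 0 ≤ gam κ := by
  have := hfun_nonneg κ
  rw [gam_eq]
  positivity

lemma three_mul_gam_le (κ : ℝ) : 3 * gam κ ≤ (2 ^ κ) ^ 2 / 256 := by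
  have := min_le_left (9 * ((2 : ℝ) ^ κ) ^ 2 / 8192) (hfun κ / 16)
  rw [gam_eq]
  linarith [sq_nonneg ((2 : ℝ) ^ κ)]

lemma sixteen_mul_gam_le (hα : α ∈ Set.Icc 0 1) (hβ : β ∈ Set.Icc 0 1) :
    16 * gam κ ≤ (α * β - 2 ^ κ / 4) ^ 2 + (α * min β (1 - β) - 2 ^ κ / 16) ^ 2 +
      (min α (1 - α) * β - 2 ^ κ / 16) ^ 2 := by
  -- The minimum over `x` of the right-hand side is the source of `9·2^{2κ-13}` in `γ(κ)`.
  have of_lt_half (x : ℝ) : 16 * gam κ ≤ (x - 2 ^ κ / 4) ^ 2 + (x - 2 ^ κ / 16) ^ 2 := by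
    have := min_le_left (9 * ((2 : ℝ) ^ κ) ^ 2 / 8192) (hfun κ / 16)
    rw [gam_eq]
    linarith [sq_nonneg (2 * x - 5 * 2 ^ κ / 16)]
  rcases lt_or_ge α (1 / 2) with hα' | hα'
  · rw [min_eq_left (by linarith : α ≤ 1 - α)]
    linarith [of_lt_half (α * β), sq_nonneg (α * min β (1 - β) - 2 ^ κ / 16)]
  rcases lt_or_ge β (1 / 2) with hβ' | hβ'
  · rw [min_eq_left (by linarith : β ≤ 1 - β)]
    linarith [of_lt_half (α * β), sq_nonneg (min α (1 - α) * β - 2 ^ κ / 16)]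
  · rw [min_eq_right (by linarith : 1 - α ≤ α), min_eq_right (by linarith : 1 - β ≤ β), ← gk_eq]
    have := min_le_right (9 * ((2 : ℝ) ^ κ) ^ 2 / 8192) (hfun κ / 16)
    have := hfun_le_gk (κ := κ) ⟨hα', hα.2⟩ ⟨hβ', hβ.2⟩
    rw [gam_eq]
    linarith

end Gamma

section LocalEnergy

variable {N : ℕ} {p : Fin N → ℝ × ℝ} {j m : ℕ × ℕ} {i : Fin N} {κ : ℝ}

lemma tent_mul_tent_of_notMem {q : ℝ × ℝ} (h : q ∉ dyadicBox j m) :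
    tent j.1 m.1 q.1 * tent j.2 m.2 q.2 = 0 := by
  rcases not_and_or.1 h with h | h
  · rw [tent_of_notMem h, zero_mul]
  · rw [tent_of_notMem h, mul_zero]

lemma tentSum_of_pointCount_eq_zero (h : pointCount p j m = 0) : tentSum p j m = 0 :=
  Finset.sum_eq_zero fun i _ => tent_mul_tent_of_notMem (pointCount_eq_zero_iff.1 h i)

lemma tentSum_eq_of_forall_ne (others : ∀ i', i' ≠ i → p i' ∉ dyadicBox j m) :
    tentSum p j m = tent j.1 m.1 (p i).1 * tent j.2 m.2 (p i).2 :=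
  Finset.sum_eq_single_of_mem i (Finset.mem_univ i) fun i' _ hi' =>
    tent_mul_tent_of_notMem (others i' hi')

/-- The energy of a dyadic box of area `2 ^ -k` without points. -/
def emptyBoxEnergy (N k : ℕ) : ℝ := (N / 2 ^ k) ^ 2 / (256 * 2 ^ k)

lemma emptyBoxEnergy_nonneg (N k : ℕ) : 0 ≤ emptyBoxEnergy N k := by
  unfold emptyBoxEnergy
  positivity

lemma boxEnergy_of_pointCount_eq_zero (h : pointCount p j m = 0) :
    boxEnergy p j m = emptyBoxEnergy N (j.1 + j.2) := by
  rw [boxEnergy, tentSum_of_pointCount_eq_zero h, emptyBoxEnergy]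
  ring

/-- The energy of a dyadic box, counted only if the box contains a point. -/
def occupiedEnergy (p : Fin N → ℝ × ℝ) (j m : ℕ × ℕ) : ℝ :=
  if pointCount p j m = 0 then 0 else boxEnergy p j m

/-- The energy of a dyadic box, counted only if the box contains no point. -/
def vacantEnergy (p : Fin N → ℝ × ℝ) (j m : ℕ × ℕ) : ℝ :=
  if pointCount p j m = 0 then boxEnergy p j m else 0

lemma occupiedEnergy_nonneg (p : Fin N → ℝ × ℝ) (j m : ℕ × ℕ) : 0 ≤ occupiedEnergy p j m := by
  have := boxEnergy_nonneg p j m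
  unfold occupiedEnergy
  positivity

lemma occupiedEnergy_add_vacantEnergy (p : Fin N → ℝ × ℝ) :
    occupiedEnergy p + vacantEnergy p = boxEnergy p := by
  ext j m
  simp only [Pi.add_apply, occupiedEnergy, vacantEnergy]
  split_ifs <;> simp

lemma le_vacantEnergy (p : Fin N → ℝ × ℝ) (j m : ℕ × ℕ) :
    (1 - pointCount p j m) * emptyBoxEnergy N (j.1 + j.2) ≤ vacantEnergy p j m := by
  rw [vacantEnergy]
  split_ifs with h
  · rw [h, boxEnergy_of_pointCount_eq_zero h, Nat.cast_zero, sub_zero, one_mul]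
  · have : (1 : ℝ) ≤ pointCount p j m := Nat.one_le_cast.2 (Nat.one_le_iff_ne_zero.2 h)
    exact mul_nonpos_of_nonpos_of_nonneg (by linarith) (emptyBoxEnergy_nonneg N _)

lemma occupiedEnergy_swap (p : Fin N → ℝ × ℝ) (j m : ℕ × ℕ) :
    occupiedEnergy (fun i => (p i).swap) j.swap m.swap = occupiedEnergy p j m := by
  have pointCount_swap : pointCount (fun i => (p i).swap) j.swap m.swap = pointCount p j m := by
    classical exact congrArg Finset.card (Finset.filter_congr fun _ _ => and_comm)
  simp only [occupiedEnergy, boxEnergy, tentSum, pointCount_swap, Prod.fst_swap, Prod.snd_swap,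
    mul_comm, add_comm]

lemma le_fstHalvesSum_occupiedEnergy (mem : p i ∈ dyadicBox j m)
    (others : ∀ i', i' ≠ i → p i' ∉ dyadicBox j m) :
    (min (tent j.1 m.1 (p i).1) (1 - tent j.1 m.1 (p i).1) * tent j.2 m.2 (p i).2 -
      N / 2 ^ (j.1 + j.2) / 16) ^ 2 / (8 * 2 ^ (j.1 + j.2)) ≤
        fstHalvesSum (occupiedEnergy p) j m := by
  have half_energy {n : ℕ} (hn : n = 2 * m.1 ∨ n = 2 * m.1 + 1)
      (mem' : (p i).1 ∈ dyadicIco (j.1 + 1) n) :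
      (min (tent j.1 m.1 (p i).1) (1 - tent j.1 m.1 (p i).1) * tent j.2 m.2 (p i).2 -
        N / 2 ^ (j.1 + j.2) / 16) ^ 2 / (8 * 2 ^ (j.1 + j.2)) =
          occupiedEnergy p (j.1 + 1, j.2) (n, m.2) := by
    have occupied : pointCount p (j.1 + 1, j.2) (n, m.2) ≠ 0 := fun h =>
      pointCount_eq_zero_iff.1 h i ⟨mem', mem.2⟩
    have subset : dyadicIco (j.1 + 1) n ⊆ dyadicIco j.1 m.1 := by
      rw [dyadicIco_eq_union (j := j.1)]
      rcases hn with rfl | rfl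
      exacts [Set.subset_union_left, Set.subset_union_right]
    rw [occupiedEnergy, if_neg occupied, boxEnergy,
      tentSum_eq_of_forall_ne (j := (j.1 + 1, j.2)) (m := (n, m.2)) fun i' hi' h =>
        others i' hi' ⟨subset h.1, h.2⟩,
      tent_succ mem' hn, Nat.add_right_comm, pow_succ]
    field_simp
    ring
  rcases dyadicIco_eq_union ▸ mem.1 with left | right
  · exact (half_energy (.inl rfl) left).trans_le
      (le_add_of_nonneg_right (occupiedEnergy_nonneg p _ _))
  · exact (half_energy (.inr rfl) right).trans_le
      (le_add_of_nonneg_left (occupiedEnergy_nonneg p _ _))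

lemma le_sndHalvesSum_occupiedEnergy (mem : p i ∈ dyadicBox j m)
    (others : ∀ i', i' ≠ i → p i' ∉ dyadicBox j m) :
    (tent j.1 m.1 (p i).1 * min (tent j.2 m.2 (p i).2) (1 - tent j.2 m.2 (p i).2) -
      N / 2 ^ (j.1 + j.2) / 16) ^ 2 / (8 * 2 ^ (j.1 + j.2)) ≤
        sndHalvesSum (occupiedEnergy p) j m := by
  have swapped := le_fstHalvesSum_occupiedEnergy (p := fun i => (p i).swap) (j := j.swap)
    (m := m.swap) mem.symm fun i' hi' h => others i' hi' h.symm
  simp only [fstHalvesSum, Prod.fst_swap, Prod.snd_swap] at swapped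
  rw [sndHalvesSum, ← occupiedEnergy_swap p, ← occupiedEnergy_swap p, mul_comm (tent _ _ _),
    add_comm j.1]
  exact swapped

/-- The energy of a dyadic box together with the averaged energy of its occupied halves. -/
def twoLevelEnergy (p : Fin N → ℝ × ℝ) (j m : ℕ × ℕ) : ℝ :=
  boxEnergy p j m + halvesAvg (occupiedEnergy p) j m

lemma boxEnergy_le_twoLevelEnergy (p : Fin N → ℝ × ℝ) (j m : ℕ × ℕ) :
    boxEnergy p j m ≤ twoLevelEnergy p j m :=
  le_add_of_nonneg_right (halvesAvg_nonneg (occupiedEnergy_nonneg p) j m)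

lemma twoLevelEnergy_nonneg (p : Fin N → ℝ × ℝ) (j m : ℕ × ℕ) : 0 ≤ twoLevelEnergy p j m :=
  (boxEnergy_nonneg p j m).trans (boxEnergy_le_twoLevelEnergy p j m)

lemma gam_div_le_twoLevelEnergy (hN : (N : ℝ) / 2 ^ (j.1 + j.2) = 2 ^ κ)
    (h : pointCount p j m = 1) : gam κ / 2 ^ (j.1 + j.2) ≤ twoLevelEnergy p j m := by
  obtain ⟨i, mem, unique⟩ := exists_unique_of_pointCount_eq_one h
  have others (i' : Fin N) (hi' : i' ≠ i) : p i' ∉ dyadicBox j m := fun h => hi' (unique i' h)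
  have fst_halves := le_fstHalvesSum_occupiedEnergy mem others
  have snd_halves := le_sndHalvesSum_occupiedEnergy mem others
  have local_bound := sixteen_mul_gam_le (κ := κ) (tent_mem_Icc j.1 m.1 (p i).1)
    (tent_mem_Icc j.2 m.2 (p i).2)
  rw [twoLevelEnergy, halvesAvg, boxEnergy, tentSum_eq_of_forall_ne others]
  rw [hN] at fst_halves snd_halves ⊢
  have := div_le_div_of_nonneg_right local_bound (by positivity : (0 : ℝ) ≤ 16 * 2 ^ (j.1 + j.2))
  rw [mul_div_mul_left _ _ (by simp), add_div, add_div] at this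
  simp only [mul_comm (8 : ℝ), mul_comm (16 : ℝ), ← div_div] at fst_halves snd_halves this ⊢
  linarith

lemma three_mul_gam_div_le_emptyBoxEnergy {k : ℕ} (hN : (N : ℝ) / 2 ^ k = 2 ^ κ) :
    3 * (gam κ / 2 ^ k) ≤ emptyBoxEnergy N k := by
  rw [emptyBoxEnergy, hN, ← mul_div_assoc, ← div_div]
  gcongr
  exact three_mul_gam_le κ

lemma le_twoLevelEnergy (p : Fin N → ℝ × ℝ) (m : ℕ × ℕ)
    (hN : (N : ℝ) / 2 ^ (j.1 + j.2) = 2 ^ κ) :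
    (1 - pointCount p j m) * emptyBoxEnergy N (j.1 + j.2) +
      (2 * pointCount p j m - 1) * (gam κ / 2 ^ (j.1 + j.2)) ≤ twoLevelEnergy p j m := by
  have gam_le := three_mul_gam_div_le_emptyBoxEnergy hN
  have gam_nonneg : 0 ≤ gam κ / 2 ^ (j.1 + j.2) := div_nonneg (gam_nonneg κ) (by positivity)
  rcases Nat.lt_or_ge (pointCount p j m) 2 with h | h
  · interval_cases hc : pointCount p j m
    · have := boxEnergy_le_twoLevelEnergy p j m
      rw [boxEnergy_of_pointCount_eq_zero hc] at this
      rw [Nat.cast_zero]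
      linarith
    · have := gam_div_le_twoLevelEnergy hN hc
      rw [Nat.cast_one]
      linarith
  · have : (2 : ℝ) ≤ pointCount p j m := Nat.ofNat_le_cast.2 h
    nlinarith [twoLevelEnergy_nonneg p j m]

/-- The energy of a dyadic box together with the averaged two-level energy of its halves. -/
def threeLevelEnergy (p : Fin N → ℝ × ℝ) (j m : ℕ × ℕ) : ℝ :=
  boxEnergy p j m + halvesAvg (twoLevelEnergy p) j m

lemma le_halvesAvg_vacantEnergy (p : Fin N → ℝ × ℝ) (j m : ℕ × ℕ) :
    (2 - pointCount p j m) * emptyBoxEnergy N (j.1 + j.2 + 1) ≤ halvesAvg (vacantEnergy p) j m := by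
  set e := emptyBoxEnergy N (j.1 + j.2 + 1)
  have half_bound (j' m' : ℕ × ℕ) (hj' : j'.1 + j'.2 = j.1 + j.2 + 1) :
      e + -e * pointCount p j' m' ≤ vacantEnergy p j' m' := by
    linarith [hj' ▸ le_vacantEnergy p j' m']
  have averaged := halvesAvg_mono (j := j) (m := m) half_bound
  rw [halvesAvg_affine_pointCount] at averaged
  linarith

lemma le_halvesAvg_twoLevelEnergy (p : Fin N → ℝ × ℝ) (m : ℕ × ℕ)
    (hN : (N : ℝ) / 2 ^ (j.1 + j.2 + 1) = 2 ^ κ) :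
    (2 - pointCount p j m) * emptyBoxEnergy N (j.1 + j.2 + 1) +
      (2 * pointCount p j m - 2) * (gam κ / 2 ^ (j.1 + j.2 + 1)) ≤
        halvesAvg (twoLevelEnergy p) j m := by
  set e := emptyBoxEnergy N (j.1 + j.2 + 1)
  set g := gam κ / 2 ^ (j.1 + j.2 + 1)
  have half_bound (j' m' : ℕ × ℕ) (hj' : j'.1 + j'.2 = j.1 + j.2 + 1) :
      e - g + (2 * g - e) * pointCount p j' m' ≤ twoLevelEnergy p j' m' := by
    have := le_twoLevelEnergy p m' (hj' ▸ hN)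
    rw [hj'] at this
    linarith
  have averaged := halvesAvg_mono (j := j) (m := m) half_bound
  rw [halvesAvg_affine_pointCount] at averaged
  linarith

lemma le_boxEnergy_of_pointCount_ne_one (hN : (N : ℝ) / 2 ^ (j.1 + j.2) = 2 ^ κ)
    (h : pointCount p j m ≠ 1) :
    (2 - pointCount p j m) * (gam κ / 2 ^ (j.1 + j.2)) ≤ boxEnergy p j m := by
  have gam_nonneg : 0 ≤ gam κ / 2 ^ (j.1 + j.2) := div_nonneg (gam_nonneg κ) (by positivity)
  rcases Nat.lt_or_ge (pointCount p j m) 2 with h' | h'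
  · have vacant : pointCount p j m = 0 := by omega
    rw [boxEnergy_of_pointCount_eq_zero vacant, vacant, Nat.cast_zero]
    linarith [three_mul_gam_div_le_emptyBoxEnergy hN]
  · have : (2 : ℝ) ≤ pointCount p j m := Nat.ofNat_le_cast.2 h'
    exact (mul_nonpos_of_nonpos_of_nonneg (by linarith) gam_nonneg).trans (boxEnergy_nonneg p j m)

lemma le_threeLevelEnergy (p : Fin N → ℝ × ℝ) (m : ℕ × ℕ)
    (hN : (N : ℝ) / 2 ^ (j.1 + j.2) = 2 ^ κ) :
    (2 - pointCount p j m) * (gam κ / 2 ^ (j.1 + j.2)) +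
      (2 * pointCount p j m - 2) * (gam (κ - 1) / 2 ^ (j.1 + j.2 + 1)) +
        (2 - pointCount p j m) * emptyBoxEnergy N (j.1 + j.2 + 1) ≤ threeLevelEnergy p j m := by
  rw [threeLevelEnergy]
  by_cases h : pointCount p j m = 1
  · have halves : halvesAvg (occupiedEnergy p) j m + halvesAvg (vacantEnergy p) j m ≤
        halvesAvg (twoLevelEnergy p) j m := by
      rw [← halvesAvg_add, occupiedEnergy_add_vacantEnergy]
      exact halvesAvg_mono fun j' m' _ => boxEnergy_le_twoLevelEnergy p j' m'
    have two_levels := gam_div_le_twoLevelEnergy hN h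
    have vacant_halves := le_halvesAvg_vacantEnergy p j m
    rw [twoLevelEnergy] at two_levels
    rw [h, Nat.cast_one] at vacant_halves ⊢
    linarith
  · have hN' : (N : ℝ) / 2 ^ (j.1 + j.2 + 1) = 2 ^ (κ - 1) := by
      rw [pow_succ, ← div_div, hN, Real.rpow_sub_one two_ne_zero]
    linarith [le_boxEnergy_of_pointCount_ne_one hN h, le_halvesAvg_twoLevelEnergy p m hN']

end LocalEnergy

section LevelSum

variable {N k M : ℕ} {p : Fin N → ℝ × ℝ} {F : ℕ × ℕ → ℕ × ℕ → ℝ} {a b κ : ℝ}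

/-- The sum of `F` over all dyadic boxes of area `2 ^ -k` in the unit square. -/
def levelSum (F : ℕ × ℕ → ℕ × ℕ → ℝ) (k : ℕ) : ℝ :=
  ∑ j ∈ Finset.HasAntidiagonal.antidiagonal k, ∑ m ∈ boxPositions j, F j m

lemma levelSum_nonneg (h : ∀ j m, 0 ≤ F j m) (k : ℕ) : 0 ≤ levelSum F k :=
  Finset.sum_nonneg fun j _ => Finset.sum_nonneg fun m _ => h j m

lemma levelSum_add (F G : ℕ × ℕ → ℕ × ℕ → ℝ) (k : ℕ) :
    levelSum (F + G) k = levelSum F k + levelSum G k := by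
  simp only [levelSum, Pi.add_apply, Finset.sum_add_distrib]

lemma sum_range_two_mul {R : Type*} [AddCommMonoid R] (f : ℕ → R) (n : ℕ) :
    ∑ i ∈ Finset.range (2 * n), f i = ∑ i ∈ Finset.range n, (f (2 * i) + f (2 * i + 1)) := by
  induction n with
  | zero => simp
  | succ n ih => rw [mul_add_one, Finset.sum_range_succ, Finset.sum_range_succ, ih, add_assoc,
      Finset.sum_range_succ]

lemma sum_boxPositions_fstHalvesSum (F : ℕ × ℕ → ℕ × ℕ → ℝ) (j : ℕ × ℕ) :
    ∑ m ∈ boxPositions j, fstHalvesSum F j m =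
      ∑ m ∈ boxPositions (j.1 + 1, j.2), F (j.1 + 1, j.2) m := by
  simp only [boxPositions, Finset.sum_product_right, pow_succ', sum_range_two_mul, fstHalvesSum]

lemma sum_boxPositions_sndHalvesSum (F : ℕ × ℕ → ℕ × ℕ → ℝ) (j : ℕ × ℕ) :
    ∑ m ∈ boxPositions j, sndHalvesSum F j m =
      ∑ m ∈ boxPositions (j.1, j.2 + 1), F (j.1, j.2 + 1) m := by
  simp only [boxPositions, Finset.sum_product, pow_succ', sum_range_two_mul, sndHalvesSum]

lemma levelSum_halvesAvg_le (h : ∀ j m, 0 ≤ F j m) (k : ℕ) :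
    levelSum (halvesAvg F) k ≤ levelSum F (k + 1) := by
  have fst_halves : levelSum (fstHalvesSum F) k ≤ levelSum F (k + 1) := by
    simp only [levelSum, sum_boxPositions_fstHalvesSum, Finset.Nat.sum_antidiagonal_succ]
    exact le_add_of_nonneg_left (Finset.sum_nonneg fun m _ => h _ m)
  have snd_halves : levelSum (sndHalvesSum F) k ≤ levelSum F (k + 1) := by
    simp only [levelSum, sum_boxPositions_sndHalvesSum, Finset.Nat.sum_antidiagonal_succ']
    exact le_add_of_nonneg_left (Finset.sum_nonneg fun m _ => h _ m)
  calc levelSum (halvesAvg F) k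
      = (levelSum (fstHalvesSum F) k + levelSum (sndHalvesSum F) k) / 2 := by
        simp only [levelSum, halvesAvg, Finset.sum_div, ← Finset.sum_add_distrib]
    _ ≤ levelSum F (k + 1) := by linarith

lemma card_boxPositions (j : ℕ × ℕ) : (boxPositions j).card = 2 ^ (j.1 + j.2) := by
  rw [boxPositions, Finset.card_product, Finset.card_range, Finset.card_range, pow_add]

lemma mul_le_levelSum (hp : ∀ i, p i ∈ unitSq)
    (h : ∀ j m, j.1 + j.2 = k → a + b * pointCount p j m ≤ F j m) :
    ((k : ℝ) + 1) * (a * 2 ^ k + b * N) ≤ levelSum F k := by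
  have shape_bound (j : ℕ × ℕ) (hj : j ∈ Finset.HasAntidiagonal.antidiagonal k) :
      a * 2 ^ k + b * N ≤ ∑ m ∈ boxPositions j, F j m := by
    rw [Finset.HasAntidiagonal.mem_antidiagonal] at hj
    calc a * 2 ^ k + b * N = ∑ m ∈ boxPositions j, (a + b * pointCount p j m) := by
          rw [Finset.sum_add_distrib, ← Finset.mul_sum, ← Nat.cast_sum, sum_pointCount hp,
            Finset.sum_const, card_boxPositions, hj, nsmul_eq_mul, mul_comm a, Nat.cast_pow,
            Nat.cast_ofNat]
      _ ≤ ∑ m ∈ boxPositions j, F j m := Finset.sum_le_sum fun m _ => h j m hj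
  simpa only [levelSum, Finset.Nat.card_antidiagonal, nsmul_eq_mul, Nat.cast_succ] using
    Finset.card_nsmul_le_sum _ _ _ shape_bound

lemma sum_levelSum_boxEnergy_le (p : Fin N → ℝ × ℝ) (K : Finset ℕ) :
    ∑ k ∈ K, levelSum (boxEnergy p) k ≤ L2disc N p ^ 2 := by
  have disjoint_levels : (K : Set ℕ).PairwiseDisjoint
      (Finset.HasAntidiagonal.antidiagonal : ℕ → Finset (ℕ × ℕ)) :=
    fun k _ l _ hkl => Finset.disjoint_left.2 fun j hk hl => hkl <|
      (Finset.HasAntidiagonal.mem_antidiagonal.1 hk).symm.trans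
        (Finset.HasAntidiagonal.mem_antidiagonal.1 hl)
  exact (Finset.sum_biUnion disjoint_levels).symm.trans_le (sum_boxEnergy_le p _)

lemma levelSum_threeLevelEnergy_add_le (p : Fin N → ℝ × ℝ) (k : ℕ) :
    levelSum (threeLevelEnergy p) k + levelSum (vacantEnergy p) (k + 2) ≤
      levelSum (boxEnergy p) k + levelSum (boxEnergy p) (k + 1) +
        levelSum (boxEnergy p) (k + 2) := by
  have three_levels : levelSum (threeLevelEnergy p) k =
      levelSum (boxEnergy p) k + levelSum (halvesAvg (twoLevelEnergy p)) k := levelSum_add _ _ k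
  have two_levels : levelSum (twoLevelEnergy p) (k + 1) = levelSum (boxEnergy p) (k + 1) +
      levelSum (halvesAvg (occupiedEnergy p)) (k + 1) := levelSum_add _ _ (k + 1)
  have one_level := levelSum_add (occupiedEnergy p) (vacantEnergy p) (k + 2)
  rw [occupiedEnergy_add_vacantEnergy] at one_level
  linarith [levelSum_halvesAvg_le (twoLevelEnergy_nonneg p) k,
    levelSum_halvesAvg_le (occupiedEnergy_nonneg p) (k + 1)]

lemma levelSum_vacantEnergy_le (p : Fin N → ℝ × ℝ) (k : ℕ) :
    levelSum (vacantEnergy p) k ≤ levelSum (boxEnergy p) k := by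
  rw [← occupiedEnergy_add_vacantEnergy, levelSum_add]
  exact le_add_of_nonneg_left (levelSum_nonneg (occupiedEnergy_nonneg p) k)

/-- A lower bound for the energy of the vacant dyadic boxes of a given shape of area `2 ^ -k`: of
these `2 ^ k` boxes at least `2 ^ k - N` contain no point. -/
def vacancyBound (N k : ℕ) : ℝ := (2 ^ k - N) * emptyBoxEnergy N k

lemma le_levelSum_vacantEnergy (hp : ∀ i, p i ∈ unitSq) (k : ℕ) :
    ((k : ℝ) + 1) * vacancyBound N k ≤ levelSum (vacantEnergy p) k := by
  have affine_bound (j m : ℕ × ℕ) (hj : j.1 + j.2 = k) : emptyBoxEnergy N k +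
      -emptyBoxEnergy N k * pointCount p j m ≤ vacantEnergy p j m := by
    linarith [hj ▸ le_vacantEnergy p j m]
  rw [vacancyBound]
  linarith [mul_le_levelSum hp affine_bound]

lemma mul_vacancyBound_le_levelSum (hp : ∀ i, p i ∈ unitSq) (hMk : M ≤ k)
    (hN : (N : ℝ) ≤ 2 ^ k) :
    ((M : ℝ) + 1) * vacancyBound N k ≤ levelSum (vacantEnergy p) k := by
  have : 0 ≤ vacancyBound N k := mul_nonneg (sub_nonneg.2 hN) (emptyBoxEnergy_nonneg N k)
  exact le_trans (by gcongr) (le_levelSum_vacantEnergy hp k)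

lemma le_levelSum_threeLevelEnergy (hp : ∀ i, p i ∈ unitSq) (hN : (N : ℝ) / 2 ^ M = 2 ^ κ) :
    ((M : ℝ) + 1) * ((2 - 2 ^ κ) * gam κ + (2 ^ κ - 1) * gam (κ - 1) + vacancyBound N (M + 1)) ≤
      levelSum (threeLevelEnergy p) M := by
  set g := gam κ / 2 ^ M
  set g' := gam (κ - 1) / 2 ^ (M + 1)
  set e := emptyBoxEnergy N (M + 1)
  have affine_bound (j m : ℕ × ℕ) (hj : j.1 + j.2 = M) :
      2 * g - 2 * g' + 2 * e + (2 * g' - g - e) * pointCount p j m ≤ threeLevelEnergy p j m := by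
    subst hj
    linarith [le_threeLevelEnergy p m hN]
  refine le_of_eq_of_le ?_ (mul_le_levelSum hp affine_bound)
  rw [← hN, vacancyBound]
  simp only [g, g', e, pow_succ]
  field_simp
  ring

lemma partialSum_le_sum_levelSum (hp : ∀ i, p i ∈ unitSq) (hN : (N : ℝ) / 2 ^ M = 2 ^ κ)
    (hN' : (N : ℝ) ≤ 2 ^ (M + 1)) (L : ℕ) :
    ((M : ℝ) + 1) * ((2 - 2 ^ κ) * gam κ + (2 ^ κ - 1) * gam (κ - 1) +
      ∑ l ∈ Finset.range (L + 2), vacancyBound N (M + 1 + l)) ≤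
        ∑ k ∈ Finset.Ico M (M + L + 3), levelSum (boxEnergy p) k := by
  have vacancy (l : ℕ) : ((M : ℝ) + 1) * vacancyBound N (M + 1 + l) ≤
      levelSum (vacantEnergy p) (M + 1 + l) :=
    mul_vacancyBound_le_levelSum hp (by omega)
      (hN'.trans (pow_le_pow_right₀ one_le_two (Nat.le_add_right _ l)))
  induction L with
  | zero =>
    have two_terms : ∑ l ∈ Finset.range (0 + 2), vacancyBound N (M + 1 + l) =
        vacancyBound N (M + 1) + vacancyBound N (M + 2) := by
      simp [Finset.sum_range_succ]
    have three_terms : ∑ k ∈ Finset.Ico M (M + 0 + 3), levelSum (boxEnergy p) k =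
        levelSum (boxEnergy p) M + levelSum (boxEnergy p) (M + 1) +
          levelSum (boxEnergy p) (M + 2) := by
      simp [Finset.sum_Ico_succ_top]
    rw [two_terms, three_terms]
    linarith [le_levelSum_threeLevelEnergy hp hN, vacancy 1, levelSum_threeLevelEnergy_add_le p M]
  | succ L ih =>
    have sum_Ico_succ : ∑ k ∈ Finset.Ico M (M + (L + 1) + 3), levelSum (boxEnergy p) k =
        ∑ k ∈ Finset.Ico M (M + L + 3), levelSum (boxEnergy p) k +
          levelSum (boxEnergy p) (M + 1 + (L + 2)) := by
      rw [show M + (L + 1) + 3 = M + L + 3 + 1 by omega, Finset.sum_Ico_succ_top (by omega),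
        show M + L + 3 = M + 1 + (L + 2) by omega]
    rw [Nat.add_right_comm L, Finset.sum_range_succ, sum_Ico_succ]
    linarith [vacancy (L + 2), levelSum_vacantEnergy_le p (M + 1 + (L + 2))]

end LevelSum

lemma two_rpow_mul_sub_eight (n : ℕ) (κ : ℝ) : (2 : ℝ) ^ (n * κ - 8) = (2 ^ κ) ^ n / 256 := by
  rw [Real.rpow_sub two_pos, mul_comm, Real.rpow_mul_natCast zero_le_two]
  norm_num

lemma hasSum_vacancyBound {N M : ℕ} {κ : ℝ} (hN : (N : ℝ) / 2 ^ M = 2 ^ κ) :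
    HasSum (fun l => vacancyBound N (M + 1 + l))
      (3⁻¹ * 2 ^ (2 * κ - 8) - 7⁻¹ * 2 ^ (3 * κ - 8)) := by
  have term_eq (l : ℕ) : vacancyBound N (M + 1 + l) =
      (2 ^ κ) ^ 2 / 1024 * (1 / 4) ^ l - (2 ^ κ) ^ 3 / 2048 * (1 / 8) ^ l := by
    have four_pow : (4 : ℝ) ^ l = (2 ^ l) ^ 2 := by rw [pow_right_comm]; norm_num
    have eight_pow : (8 : ℝ) ^ l = (2 ^ l) ^ 3 := by rw [pow_right_comm]; norm_num
    rw [vacancyBound, emptyBoxEnergy, ← hN, one_div_pow, one_div_pow, four_pow, eight_pow]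
    field_simp
    ring
  have sum_eq : 3⁻¹ * (2 : ℝ) ^ (2 * κ - 8) - 7⁻¹ * 2 ^ (3 * κ - 8) =
      (2 ^ κ) ^ 2 / 1024 * (1 - 1 / 4)⁻¹ - (2 ^ κ) ^ 3 / 2048 * (1 - 1 / 8)⁻¹ := by
    have h₂ := two_rpow_mul_sub_eight 2 κ
    have h₃ := two_rpow_mul_sub_eight 3 κ
    push_cast at h₂ h₃
    rw [h₂, h₃]
    ring
  simp only [term_eq, sum_eq]
  exact ((hasSum_geometric_of_lt_one (by norm_num) (by norm_num)).mul_left _).sub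
    ((hasSum_geometric_of_lt_one (by norm_num) (by norm_num)).mul_left _)

theorem l2disc_sq_ge_Delta_general (M : ℕ) (κ : ℝ) (hκ : κ ≤ 1)
    (N : ℕ) (p : Fin N → ℝ × ℝ) (hp : ∀ i, p i ∈ unitSq)
    (hN : (N : ℝ) = 2 ^ ((M : ℝ) + κ)) :
    ((M : ℝ) + 1) * Delta κ ≤ L2disc N p ^ 2 := by
  have N_div : (N : ℝ) / 2 ^ M = 2 ^ κ := by
    rw [hN, Real.rpow_add two_pos, Real.rpow_natCast, mul_div_cancel_left₀ _ (by positivity)]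
  have N_le : (N : ℝ) ≤ 2 ^ (M + 1) := by
    rw [hN, ← Real.rpow_natCast, Nat.cast_succ]
    gcongr
    exact one_le_two
  have partial_bound (L : ℕ) := (partialSum_le_sum_levelSum hp N_div N_le L).trans
    (sum_levelSum_boxEnergy_le p _)
  have limit := ((((Filter.tendsto_add_atTop_iff_nat 2).2
    (hasSum_vacancyBound N_div).tendsto_sum_nat).const_add
      ((2 - 2 ^ κ) * gam κ + (2 ^ κ - 1) * gam (κ - 1))).const_mul ((M : ℝ) + 1))
  have Delta_eq : Delta κ = (2 - 2 ^ κ) * gam κ + (2 ^ κ - 1) * gam (κ - 1) +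
      (3⁻¹ * 2 ^ (2 * κ - 8) - 7⁻¹ * 2 ^ (3 * κ - 8)) := by
    rw [Delta]
    ring
  exact Delta_eq ▸ le_of_tendsto' limit partial_bound

/-- If `P ⊂ [0,1)²` has `N = 2^{M+κ}` points with `M ∈ ℕ₀`, `0 ≤ κ < 1`, then
`‖D_P | L₂‖² ≥ (M+1)·Δ(κ)`. -/
theorem l2disc_sq_ge_Delta (M : ℕ) (κ : ℝ) (hκ0 : 0 ≤ κ) (hκ1 : κ < 1)
    (N : ℕ) (p : Fin N → ℝ × ℝ) (hp : ∀ i, p i ∈ unitSq)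
    (hN : (N : ℝ) = 2 ^ ((M : ℝ) + κ)) :
    ((M : ℝ) + 1) * Delta κ ≤ L2disc N p ^ 2 :=
  l2disc_sq_ge_Delta_general M κ hκ1.le N p hp hN

end
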